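/- (Lemma on injective/surjective blocks, part 2.) Let the notation be as in the context, with two splicing data (superscripts 1 and 2) and the splicing map D. Define iota(0) = inf, iota(1) = 1, iota(inf) = 0. Let (c, b, s) be one of the cyclic triples (0, 1, inf), (1, inf, 0), (inf, 0, 1). If the matrix B_c^2 is surjective and the matrix B_b^2 is injective, then: (a) dim ker(D) ≥ dim ker(B_{iota(b)}^1 · B_{iota(s)}^1) · dim ker(B_s^2 · B_b^2); and (b) dim coker(D) ≥ dim coker(B_{iota(s)}^1 · B_{iota(c)}^1) · dim coker(B_c^2 · B_s^2). -/

import Mathlib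

set_option maxHeartbeats 1600000

open Matrix Module
open scoped Kronecker

abbrev F2 : Type := ZMod 2

/-- A splicing datum: the algebraic data extracted from the knot Floer homology of a knot
in a homology sphere, as in Eftekhary's splicing formula. -/
structure SplicingDatum where
  a0 : ℕ
  a1 : ℕ
  ainf : ℕ
  A0 : Matrix (Fin ainf) (Fin ainf) F2
  B0 : Matrix (Fin ainf) (Fin a1) F2
  C0 : Matrix (Fin a1) (Fin ainf) F2
  D0 : Matrix (Fin a1) (Fin a1) F2
  A1 : Matrix (Fin a0) (Fin a0) F2
  B1 : Matrix (Fin a0) (Fin ainf) F2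
  C1 : Matrix (Fin ainf) (Fin a0) F2
  D1 : Matrix (Fin ainf) (Fin ainf) F2
  Ainf : Matrix (Fin a1) (Fin a1) F2
  Binf : Matrix (Fin a1) (Fin a0) F2
  Cinf : Matrix (Fin a0) (Fin a1) F2
  Dinf : Matrix (Fin a0) (Fin a0) F2
  C0inv : Matrix (Fin a1) (Fin ainf) F2
  C1inv : Matrix (Fin ainf) (Fin a0) F2
  Cinfinv : Matrix (Fin a0) (Fin a1) F2
  inv0_left : Matrix.fromBlocks A0 B0 C0 D0 * Matrix.fromBlocks A0 B0 C0inv D0 = 1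
  inv0_right : Matrix.fromBlocks A0 B0 C0inv D0 * Matrix.fromBlocks A0 B0 C0 D0 = 1
  inv1_left : Matrix.fromBlocks A1 B1 C1 D1 * Matrix.fromBlocks A1 B1 C1inv D1 = 1
  inv1_right : Matrix.fromBlocks A1 B1 C1inv D1 * Matrix.fromBlocks A1 B1 C1 D1 = 1
  invinf_left : Matrix.fromBlocks Ainf Binf Cinf Dinf * Matrix.fromBlocks Ainf Binf Cinfinv Dinf = 1
  invinf_right : Matrix.fromBlocks Ainf Binf Cinfinv Dinf * Matrix.fromBlocks Ainf Binf Cinf Dinf = 1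
  comm0 : A0 * B0 + B0 * D0 = 0
  comm1 : A1 * B1 + B1 * D1 = 0
  comminf : Ainf * Binf + Binf * Dinf = 0
  sq0 : B1 * B0 * Binf * (B1 * B0 * Binf) = 0
  sq1 : Binf * B1 * B0 * (Binf * B1 * B0) = 0
  sqinf : B0 * Binf * B1 * (B0 * Binf * B1) = 0

/-- dimension of the kernel of the linear map induced by a matrix -/
noncomputable def kdim {m n : Type*} [Fintype n] (M : Matrix m n F2) : ℕ :=
  finrank F2 ↥(LinearMap.ker M.mulVecLin)

/-- dimension of the cokernel of the linear map induced by a matrix -/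
noncomputable def cdim {m n : Type*} [Fintype n] (M : Matrix m n F2) : ℕ :=
  finrank F2 ((m → F2) ⧸ LinearMap.range M.mulVecLin)

/-- tensor product of two vectors, as a vector indexed by the product type -/
def tensVec {m n : Type*} (x : m → F2) (y : n → F2) : m × n → F2 :=
  fun p => x p.1 * y p.2

namespace SplicingDatum

variable (d : SplicingDatum)

def X0M : Matrix (Fin d.a0) (Fin d.a0) F2 := d.B1 * d.B0 * d.Binf
def X1M : Matrix (Fin d.a1) (Fin d.a1) F2 := d.Binf * d.B1 * d.B0
def XinfM : Matrix (Fin d.ainf) (Fin d.ainf) F2 := d.B0 * d.Binf * d.B1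

def tau0 : Matrix (Fin d.ainf ⊕ Fin d.a1) (Fin d.ainf ⊕ Fin d.a1) F2 :=
  Matrix.fromBlocks d.A0 d.B0 d.C0 d.D0
def tau0inv : Matrix (Fin d.ainf ⊕ Fin d.a1) (Fin d.ainf ⊕ Fin d.a1) F2 :=
  Matrix.fromBlocks d.A0 d.B0 d.C0inv d.D0
def tau1 : Matrix (Fin d.a0 ⊕ Fin d.ainf) (Fin d.a0 ⊕ Fin d.ainf) F2 :=
  Matrix.fromBlocks d.A1 d.B1 d.C1 d.D1
def tau1inv : Matrix (Fin d.a0 ⊕ Fin d.ainf) (Fin d.a0 ⊕ Fin d.ainf) F2 :=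
  Matrix.fromBlocks d.A1 d.B1 d.C1inv d.D1
def tauinf : Matrix (Fin d.a1 ⊕ Fin d.a0) (Fin d.a1 ⊕ Fin d.a0) F2 :=
  Matrix.fromBlocks d.Ainf d.Binf d.Cinf d.Dinf
def tauinfinv : Matrix (Fin d.a1 ⊕ Fin d.a0) (Fin d.a1 ⊕ Fin d.a0) F2 :=
  Matrix.fromBlocks d.Ainf d.Binf d.Cinfinv d.Dinf

/-- the map `finf : F^{ainf+a1} → F^{a0+ainf}` -/
def finfM : Matrix (Fin d.a0 ⊕ Fin d.ainf) (Fin d.ainf ⊕ Fin d.a1) F2 :=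
  Matrix.fromBlocks 0 0 (1 : Matrix (Fin d.ainf) (Fin d.ainf) F2) 0
/-- the map `f0 : F^{a0+ainf} → F^{a1+a0}` -/
def f0M : Matrix (Fin d.a1 ⊕ Fin d.a0) (Fin d.a0 ⊕ Fin d.ainf) F2 :=
  Matrix.fromBlocks 0 0 (1 : Matrix (Fin d.a0) (Fin d.a0) F2) 0
/-- the map `f1 : F^{a1+a0} → F^{ainf+a1}` -/
def f1M : Matrix (Fin d.ainf ⊕ Fin d.a1) (Fin d.a1 ⊕ Fin d.a0) F2 :=
  Matrix.fromBlocks 0 0 (1 : Matrix (Fin d.a1) (Fin d.a1) F2) 0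

def fbarinfM : Matrix (Fin d.a0 ⊕ Fin d.ainf) (Fin d.ainf ⊕ Fin d.a1) F2 :=
  d.tau1inv * d.finfM * d.tau0
def fbar0M : Matrix (Fin d.a1 ⊕ Fin d.a0) (Fin d.a0 ⊕ Fin d.ainf) F2 :=
  d.tauinfinv * d.f0M * d.tau1
def fbar1M : Matrix (Fin d.ainf ⊕ Fin d.a1) (Fin d.a1 ⊕ Fin d.a0) F2 :=
  d.tau0inv * d.f1M * d.tauinf

noncomputable def r0 : ℕ := d.B0.rank
noncomputable def r1 : ℕ := d.B1.rank
noncomputable def rinf : ℕ := d.Binf.rank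

noncomputable def k0 : ℕ :=
  finrank F2 ↥(LinearMap.ker d.f0M.mulVecLin ⊓ LinearMap.ker d.fbar0M.mulVecLin)
noncomputable def k1 : ℕ :=
  finrank F2 ↥(LinearMap.ker d.f1M.mulVecLin ⊓ LinearMap.ker d.fbar1M.mulVecLin)
noncomputable def kinf : ℕ :=
  finrank F2 ↥(LinearMap.ker d.finfM.mulVecLin ⊓ LinearMap.ker d.fbarinfM.mulVecLin)

noncomputable def l0 : ℕ :=
  finrank F2 ↥(LinearMap.ker (d.f0M + d.fbar0M).mulVecLin) - d.k0
noncomputable def l1 : ℕ :=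
  finrank F2 ↥(LinearMap.ker (d.f1M + d.fbar1M).mulVecLin) - d.k1
noncomputable def linf : ℕ :=
  finrank F2 ↥(LinearMap.ker (d.finfM + d.fbarinfM).mulVecLin) - d.kinf

noncomputable def c0 : ℕ :=
  finrank F2 ((Fin d.a1 ⊕ Fin d.a0 → F2) ⧸
    (LinearMap.range d.f0M.mulVecLin ⊔ LinearMap.range d.fbar0M.mulVecLin))
noncomputable def c1 : ℕ :=
  finrank F2 ((Fin d.ainf ⊕ Fin d.a1 → F2) ⧸
    (LinearMap.range d.f1M.mulVecLin ⊔ LinearMap.range d.fbar1M.mulVecLin))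
noncomputable def cinf : ℕ :=
  finrank F2 ((Fin d.a0 ⊕ Fin d.ainf → F2) ⧸
    (LinearMap.range d.finfM.mulVecLin ⊔ LinearMap.range d.fbarinfM.mulVecLin))

noncomputable def dd0 : ℕ :=
  finrank F2 ↥(LinearMap.range d.f0M.mulVecLin ⊔ LinearMap.range d.fbar0M.mulVecLin) -
    finrank F2 ↥(LinearMap.range (d.f0M + d.fbar0M).mulVecLin)
noncomputable def dd1 : ℕ :=
  finrank F2 ↥(LinearMap.range d.f1M.mulVecLin ⊔ LinearMap.range d.fbar1M.mulVecLin) -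
    finrank F2 ↥(LinearMap.range (d.f1M + d.fbar1M).mulVecLin)
noncomputable def ddinf : ℕ :=
  finrank F2 ↥(LinearMap.range d.finfM.mulVecLin ⊔ LinearMap.range d.fbarinfM.mulVecLin) -
    finrank F2 ↥(LinearMap.range (d.finfM + d.fbarinfM).mulVecLin)

noncomputable def delta0 : ℕ := d.a0 - d.rinf - d.l0
noncomputable def delta1 : ℕ := d.a1 - d.r0 - d.l1
noncomputable def deltainf : ℕ := d.ainf - d.r1 - d.linf

end SplicingDatum

namespace SplicingDatum

/-- Index type of the source of the splicing map `D`. -/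
abbrev Src (e1 e2 : SplicingDatum) : Type :=
  (Fin e1.ainf × Fin e2.ainf) ⊕ (Fin e1.ainf × Fin e2.a0) ⊕ (Fin e1.a1 × Fin e2.a0) ⊕
    (Fin e1.a0 × Fin e2.ainf) ⊕ (Fin e1.a0 × Fin e2.a1) ⊕ (Fin e1.a1 × Fin e2.a1)

/-- Index type of the target of the splicing map `D`. -/
abbrev Tgt (e1 e2 : SplicingDatum) : Type :=
  (Fin e1.a0 × Fin e2.a0) ⊕ (Fin e1.ainf × Fin e2.a1) ⊕ (Fin e1.ainf × Fin e2.a0) ⊕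
    (Fin e1.a1 × Fin e2.ainf) ⊕ (Fin e1.a0 × Fin e2.ainf) ⊕ (Fin e1.a1 × Fin e2.a1)

def row1 (e1 e2 : SplicingDatum) : Matrix (Fin e1.a0 × Fin e2.a0) (Src e1 e2) F2 :=
  Matrix.fromCols ((e1.Dinf * e1.B1) ⊗ₖ (e2.B1 * e2.A0)) <|
  Matrix.fromCols ((e1.B1 * e1.A0) ⊗ₖ (1 : Matrix (Fin e2.a0) (Fin e2.a0) F2)) <|
  Matrix.fromCols ((e1.B1 * e1.B0) ⊗ₖ (1 : Matrix (Fin e2.a0) (Fin e2.a0) F2)) <|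
  Matrix.fromCols ((e1.Dinf * e1.A1) ⊗ₖ (e2.B1 * e2.A0)) <|
  Matrix.fromCols ((1 : Matrix (Fin e1.a0) (Fin e1.a0) F2) ⊗ₖ (e2.B1 * e2.B0)) 0

def row2 (e1 e2 : SplicingDatum) : Matrix (Fin e1.ainf × Fin e2.a1) (Src e1 e2) F2 :=
  Matrix.fromCols ((1 : Matrix (Fin e1.ainf) (Fin e1.ainf) F2) ⊗ₖ (e2.Binf * e2.B1)) <|
  Matrix.fromCols ((e1.D1 * e1.A0) ⊗ₖ (e2.Binf * e2.A1)) <|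
  Matrix.fromCols ((e1.D1 * e1.B0) ⊗ₖ (e2.Binf * e2.A1)) <|
  Matrix.fromCols 0 <|
  Matrix.fromCols ((e1.B0 * e1.Binf) ⊗ₖ (1 : Matrix (Fin e2.a1) (Fin e2.a1) F2))
    ((e1.B0 * e1.Ainf) ⊗ₖ (1 : Matrix (Fin e2.a1) (Fin e2.a1) F2))

def row3 (e1 e2 : SplicingDatum) : Matrix (Fin e1.ainf × Fin e2.a0) (Src e1 e2) F2 :=
  Matrix.fromCols ((1 : Matrix (Fin e1.ainf) (Fin e1.ainf) F2) ⊗ₖ (e2.Dinf * e2.B1)) <|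
  Matrix.fromCols
    ((1 : Matrix (Fin e1.ainf) (Fin e1.ainf) F2) ⊗ₖ (1 : Matrix (Fin e2.a0) (Fin e2.a0) F2) +
      (e1.D1 * e1.A0) ⊗ₖ (e2.Dinf * e2.A1)) <|
  Matrix.fromCols ((e1.D1 * e1.B0) ⊗ₖ (e2.Dinf * e2.A1)) <|
  Matrix.fromCols 0 <|
  Matrix.fromCols 0 0

def row4 (e1 e2 : SplicingDatum) : Matrix (Fin e1.a1 × Fin e2.ainf) (Src e1 e2) F2 :=
  Matrix.fromCols ((e1.Binf * e1.B1) ⊗ₖ (1 : Matrix (Fin e2.ainf) (Fin e2.ainf) F2)) <|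
  Matrix.fromCols 0 <|
  Matrix.fromCols ((1 : Matrix (Fin e1.a1) (Fin e1.a1) F2) ⊗ₖ (e2.B0 * e2.Binf)) <|
  Matrix.fromCols ((e1.Binf * e1.A1) ⊗ₖ (1 : Matrix (Fin e2.ainf) (Fin e2.ainf) F2)) <|
  Matrix.fromCols
    ((e1.D0 * e1.Binf) ⊗ₖ (e2.B0 * e2.Ainf) + (e1.X1M * e1.Binf) ⊗ₖ (e2.B0 * e2.X1M))
    ((e1.D0 * e1.Ainf) ⊗ₖ (e2.B0 * e2.Ainf) + (e1.X1M * e1.Ainf) ⊗ₖ (e2.B0 * e2.X1M))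

def row5 (e1 e2 : SplicingDatum) : Matrix (Fin e1.a0 × Fin e2.ainf) (Src e1 e2) F2 :=
  Matrix.fromCols ((e1.Dinf * e1.B1) ⊗ₖ (e2.D1 * e2.A0)) <|
  Matrix.fromCols 0 <|
  Matrix.fromCols 0 <|
  Matrix.fromCols
    ((1 : Matrix (Fin e1.a0) (Fin e1.a0) F2) ⊗ₖ (1 : Matrix (Fin e2.ainf) (Fin e2.ainf) F2) +
      (e1.Dinf * e1.A1) ⊗ₖ (e2.D1 * e2.A0)) <|
  Matrix.fromCols ((1 : Matrix (Fin e1.a0) (Fin e1.a0) F2) ⊗ₖ (e2.D1 * e2.B0)) 0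

def row6 (e1 e2 : SplicingDatum) : Matrix (Fin e1.a1 × Fin e2.a1) (Src e1 e2) F2 :=
  Matrix.fromCols 0 <|
  Matrix.fromCols 0 <|
  Matrix.fromCols ((1 : Matrix (Fin e1.a1) (Fin e1.a1) F2) ⊗ₖ (e2.D0 * e2.Binf)) <|
  Matrix.fromCols 0 <|
  Matrix.fromCols
    ((e1.D0 * e1.Binf) ⊗ₖ (e2.D0 * e2.Ainf) + (e1.X1M * e1.Binf) ⊗ₖ (e2.D0 * e2.X1M))
    ((1 : Matrix (Fin e1.a1) (Fin e1.a1) F2) ⊗ₖ (1 : Matrix (Fin e2.a1) (Fin e2.a1) F2) +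
      (e1.D0 * e1.Ainf) ⊗ₖ (e2.D0 * e2.Ainf) + (e1.X1M * e1.Ainf) ⊗ₖ (e2.D0 * e2.X1M))

/-- The splicing map `D = D(K1, K2)` as a `6 × 6` block matrix. -/
def spliceD (e1 e2 : SplicingDatum) : Matrix (Tgt e1 e2) (Src e1 e2) F2 :=
  Matrix.fromRows (row1 e1 e2) <| Matrix.fromRows (row2 e1 e2) <|
  Matrix.fromRows (row3 e1 e2) <| Matrix.fromRows (row4 e1 e2) <|
  Matrix.fromRows (row5 e1 e2) (row6 e1 e2)

end SplicingDatum

/-!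
Over `F2` each commutation relation reads `A * B = B * D`. In the case `(c, b, s) = (0, 1, ∞)`, take
`x ∈ ker (B₁B₀)` for the first datum and `y ∈ ker (B_∞B₁)` for the second. The vector with
components `D₁B₀x ⊗ D₁y` and `x ⊗ B₁y` is annihilated by `D`: every term containing
`B₁D₁B₀x = A₁B₁B₀x` or `B_∞B₁y` vanishes, and the remaining ones cancel in pairs because
`A₁B₁y = B₁D₁y`. As `B₁` is injective, `x ⊗ y` is recovered from `x ⊗ B₁y`, so
`ker (B₁B₀) ⊗ ker (B_∞B₁)` embeds into `ker D`. The two other cases are cyclic analogues, and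
cokernels are treated dually, as kernels of transposes.
-/

theorem add_self_add_cancel {G : Type*} [AddCommGroup G] [Module (ZMod 2) G] (x y : G) :
    x + (x + y) = y := by
  rw [← add_assoc, ZModModule.add_self, zero_add]

theorem fromCols_add_fromCols {S m n p : Type*} [Add S] (A C : Matrix m n S)
    (B D : Matrix m p S) :
    fromCols A B + fromCols C D = fromCols (A + C) (B + D) := by
  ext i (j | j) <;> rfl

section MatrixRing

variable {R m n p q : Type*} [CommSemiring R] [Fintype n] [Fintype q]

theorem mul_mul_eq_zero_of_intertwine_left {κ : Type*} {A : Matrix q q R} {B : Matrix q n R}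
    {D : Matrix n n R} {Y : Matrix n κ R} (hAB : A * B = B * D) (hY : B * Y = 0) :
    B * (D * Y) = 0 := by
  rw [← Matrix.mul_assoc, ← hAB, Matrix.mul_assoc, hY, Matrix.mul_zero]

theorem mul_mul_eq_zero_of_intertwine_right {κ : Type*} {A : Matrix q q R} {B : Matrix q n R}
    {D : Matrix n n R} {Y : Matrix κ q R} (hAB : A * B = B * D) (hY : Y * B = 0) :
    Y * A * B = 0 := by
  rw [Matrix.mul_assoc, hAB, ← Matrix.mul_assoc, hY, Matrix.zero_mul]

theorem mulVecLin_injective_of_mul_eq_one [Fintype m] [DecidableEq n] {L : Matrix n m R}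
    {M : Matrix m n R} (h : L * M = 1) : Function.Injective M.mulVecLin :=
  Function.LeftInverse.injective (g := L.mulVecLin) fun v ↦ by simp [h]

theorem fromRows_mulVecLin_injective_left {A : Matrix m n R} (B : Matrix p n R)
    (hA : Function.Injective A.mulVecLin) : Function.Injective (fromRows A B).mulVecLin :=
  fun _ _ h ↦ hA <| by simpa using congrArg (· ∘ Sum.inl) h

theorem fromRows_mulVecLin_injective_right (A : Matrix m n R) {B : Matrix p n R}
    (hB : Function.Injective B.mulVecLin) : Function.Injective (fromRows A B).mulVecLin :=
  fun _ _ h ↦ hB <| by simpa using congrArg (· ∘ Sum.inr) h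

theorem fromCols_mulVecLin_surjective_left {A : Matrix m n R} (B : Matrix m q R)
    (hA : Function.Surjective A.mulVecLin) : Function.Surjective (fromCols A B).mulVecLin := by
  intro y
  obtain ⟨x, rfl⟩ := hA y
  exact ⟨Sum.elim x 0, by simp⟩

theorem fromCols_mulVecLin_surjective_right (A : Matrix m n R) {B : Matrix m q R}
    (hB : Function.Surjective B.mulVecLin) : Function.Surjective (fromCols A B).mulVecLin := by
  intro y
  obtain ⟨x, rfl⟩ := hB y
  exact ⟨Sum.elim 0 x, by simp⟩

theorem kronecker_mulVecLin_surjective [Finite m] [Finite p] {A : Matrix m n R} {B : Matrix p q R}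
    (hA : Function.Surjective A.mulVecLin) (hB : Function.Surjective B.mulVecLin) :
    Function.Surjective (A ⊗ₖ B).mulVecLin := by
  classical
  cases nonempty_fintype m
  cases nonempty_fintype p
  obtain ⟨J, hJ⟩ := mulVec_surjective_iff_exists_right_inverse.mp hA
  obtain ⟨J', hJ'⟩ := mulVec_surjective_iff_exists_right_inverse.mp hB
  refine mulVec_surjective_iff_exists_right_inverse.mpr ⟨J ⊗ₖ J', ?_⟩
  rw [← mul_kronecker_mul, hJ, hJ', one_kronecker_one]

end MatrixRing

section KernelDimension

variable {K m n p q : Type*} [Field K] [Fintype n] [Fintype p] [Fintype q]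

theorem exists_left_inverse_of_mulVecLin_injective [Fintype m] [DecidableEq n] {M : Matrix m n K}
    (hM : Function.Injective M.mulVecLin) : ∃ L : Matrix n m K, L * M = 1 := by
  classical
  obtain ⟨g, hg⟩ := M.mulVecLin.exists_leftInverse_of_injective (LinearMap.ker_eq_bot.mpr hM)
  refine ⟨LinearMap.toMatrix' g, ?_⟩
  simpa [LinearMap.toMatrix'_comp, ← Matrix.toLin'_apply'] using congrArg LinearMap.toMatrix' hg

theorem kronecker_mulVecLin_injective [Finite m] {r : Type*} [Finite r] {A : Matrix m n K}
    {B : Matrix r q K} (hA : Function.Injective A.mulVecLin)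
    (hB : Function.Injective B.mulVecLin) : Function.Injective (A ⊗ₖ B).mulVecLin := by
  classical
  cases nonempty_fintype m
  cases nonempty_fintype r
  obtain ⟨L, hL⟩ := exists_left_inverse_of_mulVecLin_injective hA
  obtain ⟨L', hL'⟩ := exists_left_inverse_of_mulVecLin_injective hB
  refine mulVecLin_injective_of_mul_eq_one (L := L ⊗ₖ L') ?_
  rw [← mul_kronecker_mul, hL, hL', one_kronecker_one]

theorem exists_mulVecLin_injective_mul_eq_zero (A : Matrix m n K) :
    ∃ N : Matrix n (Fin (finrank K (LinearMap.ker A.mulVecLin))) K,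
      Function.Injective N.mulVecLin ∧ A * N = 0 := by
  let b := finBasis K (LinearMap.ker A.mulVecLin)
  refine ⟨.of fun i j ↦ (b j : n → K) i, ?_, ?_⟩
  · exact Matrix.mulVec_injective_iff.mpr
      (b.linearIndependent.map' _ (LinearMap.ker A.mulVecLin).ker_subtype)
  · ext i j
    exact congrFun (LinearMap.mem_ker.mp (b j).2) i

theorem card_le_finrank_ker_mulVecLin {M : Matrix m n K} {V : Matrix n p K}
    (hV : Function.Injective V.mulVecLin) (hMV : M * V = 0) :
    Fintype.card p ≤ finrank K (LinearMap.ker M.mulVecLin) := by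
  have hmem (v : p → K) : V.mulVecLin v ∈ LinearMap.ker M.mulVecLin := by simp [hMV]
  simpa using LinearMap.finrank_le_finrank_of_injective
    (f := V.mulVecLin.codRestrict _ hmem) fun v w h ↦ hV (congrArg Subtype.val h)

theorem finrank_ker_mul_finrank_ker_le {m₁ m₂ : Type*} {A : Matrix m₁ p K} {A' : Matrix m₂ q K}
    {M : Matrix m n K} {E : Matrix n (p × q) K} (hE : Function.Injective E.mulVecLin)
    (h : ∀ (k l : ℕ) (N : Matrix p (Fin k) K) (N' : Matrix q (Fin l) K),
      A * N = 0 → A' * N' = 0 → M * (E * (N ⊗ₖ N')) = 0) :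
    finrank K (LinearMap.ker A.mulVecLin) * finrank K (LinearMap.ker A'.mulVecLin) ≤
      finrank K (LinearMap.ker M.mulVecLin) := by
  obtain ⟨N, hN, hAN⟩ := exists_mulVecLin_injective_mul_eq_zero A
  obtain ⟨N', hN', hAN'⟩ := exists_mulVecLin_injective_mul_eq_zero A'
  have hV : Function.Injective (E * (N ⊗ₖ N')).mulVecLin := by
    rw [mulVecLin_mul]
    exact hE.comp (kronecker_mulVecLin_injective hN hN')
  simpa using card_le_finrank_ker_mulVecLin hV (h _ _ N N' hAN hAN')

theorem finrank_quotient_range_eq_finrank_ker_transpose [Fintype m] (M : Matrix m n K) :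
    finrank K ((m → K) ⧸ LinearMap.range M.mulVecLin) =
      finrank K (LinearMap.ker Mᵀ.mulVecLin) := by
  have hM := (LinearMap.range M.mulVecLin).finrank_quotient_add_finrank
  have hMt := Mᵀ.mulVecLin.finrank_range_add_finrank_ker
  have hrank : finrank K (LinearMap.range Mᵀ.mulVecLin) = finrank K (LinearMap.range M.mulVecLin) :=
    M.rank_transpose
  omega

theorem finrank_quotient_range_mul_finrank_quotient_range_le [Fintype m] {n₁ n₂ : Type*}
    [Fintype n₁] [Fintype n₂] {A : Matrix p n₁ K} {A' : Matrix q n₂ K} {M : Matrix m n K}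
    {E : Matrix (p × q) m K} (hE : Function.Surjective E.mulVecLin)
    (h : ∀ (k l : ℕ) (P : Matrix (Fin k) p K) (P' : Matrix (Fin l) q K),
      P * A = 0 → P' * A' = 0 → (P ⊗ₖ P') * E * M = 0) :
    finrank K ((p → K) ⧸ LinearMap.range A.mulVecLin) *
        finrank K ((q → K) ⧸ LinearMap.range A'.mulVecLin) ≤
      finrank K ((m → K) ⧸ LinearMap.range M.mulVecLin) := by
  classical
  obtain ⟨J, hJ⟩ := mulVec_surjective_iff_exists_right_inverse.mp hE
  have hEt : Function.Injective Eᵀ.mulVecLin :=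
    mulVecLin_injective_of_mul_eq_one (L := Jᵀ) (by rw [← transpose_mul, hJ, transpose_one])
  simp only [finrank_quotient_range_eq_finrank_ker_transpose]
  refine finrank_ker_mul_finrank_ker_le hEt fun k l N N' hN hN' ↦ transpose_injective ?_
  have hNA : Nᵀ * A = 0 := by simpa using congrArg transpose hN
  have hNA' : N'ᵀ * A' = 0 := by simpa using congrArg transpose hN'
  simpa [kroneckerMap_transpose] using h k l Nᵀ N'ᵀ hNA hNA'

end KernelDimension

namespace SplicingDatum

section Commutation

variable (d : SplicingDatum)

theorem A0_mul_B0 : d.A0 * d.B0 = d.B0 * d.D0 := by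
  simpa only [ZModModule.neg_eq_self] using eq_neg_of_add_eq_zero_left d.comm0

theorem A1_mul_B1 : d.A1 * d.B1 = d.B1 * d.D1 := by
  simpa only [ZModModule.neg_eq_self] using eq_neg_of_add_eq_zero_left d.comm1

theorem Ainf_mul_Binf : d.Ainf * d.Binf = d.Binf * d.Dinf := by
  simpa only [ZModModule.neg_eq_self] using eq_neg_of_add_eq_zero_left d.comminf

end Commutation

section Kernel

variable (e1 e2 : SplicingDatum)

/-- The map `x ⊗ y ↦ (D₁B₀x ⊗ D₁y, 0, x ⊗ B₁y, 0, 0, 0)`, which sends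
`ker (B₁B₀) ⊗ ker (B_∞B₁)` into `ker D`. -/
def kerEmb1 : Matrix (Src e1 e2) (Fin e1.a1 × Fin e2.ainf) F2 :=
  fromRows ((e1.D1 * e1.B0) ⊗ₖ e2.D1) <| fromRows 0 <| fromRows (1 ⊗ₖ e2.B1) <| fromRows 0 <|
    fromRows 0 0

theorem kerEmb1_injective (h : Function.Injective e2.B1.mulVecLin) :
    Function.Injective (kerEmb1 e1 e2).mulVecLin :=
  fromRows_mulVecLin_injective_right _ <| fromRows_mulVecLin_injective_right _ <|
    fromRows_mulVecLin_injective_left _ <|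
    kronecker_mulVecLin_injective (by simp [Function.injective_id]) h

theorem spliceD_mul_kerEmb1_mul_kronecker_eq_zero {κ κ' : Type*} {N : Matrix (Fin e1.a1) κ F2}
    {N' : Matrix (Fin e2.ainf) κ' F2} (hN : e1.B1 * e1.B0 * N = 0)
    (hN' : e2.Binf * e2.B1 * N' = 0) :
    spliceD e1 e2 * (kerEmb1 e1 e2 * (N ⊗ₖ N')) = 0 := by
  rw [Matrix.mul_assoc] at hN hN'
  have hBDBN : e1.B1 * (e1.D1 * (e1.B0 * N)) = 0 :=
    mul_mul_eq_zero_of_intertwine_left e1.A1_mul_B1 hN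
  have hABN' : e2.A1 * (e2.B1 * N') = e2.B1 * (e2.D1 * N') := by
    rw [← Matrix.mul_assoc, A1_mul_B1, Matrix.mul_assoc]
  simp only [spliceD, row1, row2, row3, row4, row5, row6, X1M, kerEmb1, fromRows_mul,
    fromCols_mul_fromRows, ← mul_kronecker_mul, Matrix.one_mul, Matrix.mul_assoc,
    Matrix.zero_mul, Matrix.mul_zero, kronecker_zero, zero_kronecker, add_zero, zero_add,
    hN, hN', hBDBN, hABN', ZModModule.add_self, fromRows_zero]

theorem kdim_mul_kdim_le_kdim_spliceD_of_injective_B1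
    (h : Function.Injective e2.B1.mulVecLin) :
    kdim (e1.B1 * e1.B0) * kdim (e2.Binf * e2.B1) ≤ kdim (spliceD e1 e2) :=
  finrank_ker_mul_finrank_ker_le (kerEmb1_injective e1 e2 h)
    fun _ _ _ _ ↦ spliceD_mul_kerEmb1_mul_kronecker_eq_zero e1 e2

/-- The map `x ⊗ y ↦ (0, 0, D₀B_∞x ⊗ D_∞y, 0, x ⊗ B_∞y, 0)`, which sends
`ker (B₀B_∞) ⊗ ker (B₀B_∞)` into `ker D`. -/
def kerEmbinf : Matrix (Src e1 e2) (Fin e1.a0 × Fin e2.a0) F2 :=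
  fromRows 0 <| fromRows 0 <| fromRows ((e1.D0 * e1.Binf) ⊗ₖ e2.Dinf) <| fromRows 0 <|
    fromRows (1 ⊗ₖ e2.Binf) 0

theorem kerEmbinf_injective (h : Function.Injective e2.Binf.mulVecLin) :
    Function.Injective (kerEmbinf e1 e2).mulVecLin :=
  fromRows_mulVecLin_injective_right _ <| fromRows_mulVecLin_injective_right _ <|
    fromRows_mulVecLin_injective_right _ <| fromRows_mulVecLin_injective_right _ <|
    fromRows_mulVecLin_injective_left _ <|
    kronecker_mulVecLin_injective (by simp [Function.injective_id]) h

theorem spliceD_mul_kerEmbinf_mul_kronecker_eq_zero {κ κ' : Type*} {N : Matrix (Fin e1.a0) κ F2}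
    {N' : Matrix (Fin e2.a0) κ' F2} (hN : e1.B0 * e1.Binf * N = 0)
    (hN' : e2.B0 * e2.Binf * N' = 0) :
    spliceD e1 e2 * (kerEmbinf e1 e2 * (N ⊗ₖ N')) = 0 := by
  rw [Matrix.mul_assoc] at hN hN'
  have hBDBN : e1.B0 * (e1.D0 * (e1.Binf * N)) = 0 :=
    mul_mul_eq_zero_of_intertwine_left e1.A0_mul_B0 hN
  have hABN' : e2.Ainf * (e2.Binf * N') = e2.Binf * (e2.Dinf * N') := by
    rw [← Matrix.mul_assoc, Ainf_mul_Binf, Matrix.mul_assoc]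
  simp only [spliceD, row1, row2, row3, row4, row5, row6, X1M, kerEmbinf, fromRows_mul,
    fromCols_mul_fromRows, Matrix.add_mul, ← mul_kronecker_mul, Matrix.one_mul, Matrix.mul_assoc,
    Matrix.zero_mul, Matrix.mul_zero, kronecker_zero, zero_kronecker, add_zero, zero_add,
    hN, hN', hBDBN, hABN', ZModModule.add_self, fromRows_zero]

theorem kdim_mul_kdim_le_kdim_spliceD_of_injective_Binf
    (h : Function.Injective e2.Binf.mulVecLin) :
    kdim (e1.B0 * e1.Binf) * kdim (e2.B0 * e2.Binf) ≤ kdim (spliceD e1 e2) :=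
  finrank_ker_mul_finrank_ker_le (kerEmbinf_injective e1 e2 h)
    fun _ _ _ _ ↦ spliceD_mul_kerEmbinf_mul_kronecker_eq_zero e1 e2

/-- The map `x ⊗ y ↦ (x ⊗ B₀y, 0, 0, 0, D_∞B₁x ⊗ D₀y, 0)`, which sends
`ker (B_∞B₁) ⊗ ker (B₁B₀)` into `ker D`. -/
def kerEmb0 : Matrix (Src e1 e2) (Fin e1.ainf × Fin e2.a1) F2 :=
  fromRows (1 ⊗ₖ e2.B0) <| fromRows 0 <| fromRows 0 <| fromRows 0 <|
    fromRows ((e1.Dinf * e1.B1) ⊗ₖ e2.D0) 0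

theorem kerEmb0_injective (h : Function.Injective e2.B0.mulVecLin) :
    Function.Injective (kerEmb0 e1 e2).mulVecLin :=
  fromRows_mulVecLin_injective_left _ <|
    kronecker_mulVecLin_injective (by simp [Function.injective_id]) h

theorem spliceD_mul_kerEmb0_mul_kronecker_eq_zero {κ κ' : Type*} {N : Matrix (Fin e1.ainf) κ F2}
    {N' : Matrix (Fin e2.a1) κ' F2} (hN : e1.Binf * e1.B1 * N = 0)
    (hN' : e2.B1 * e2.B0 * N' = 0) :
    spliceD e1 e2 * (kerEmb0 e1 e2 * (N ⊗ₖ N')) = 0 := by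
  rw [Matrix.mul_assoc] at hN hN'
  have hBDBN : e1.Binf * (e1.Dinf * (e1.B1 * N)) = 0 :=
    mul_mul_eq_zero_of_intertwine_left e1.Ainf_mul_Binf hN
  have hABN' : e2.A0 * (e2.B0 * N') = e2.B0 * (e2.D0 * N') := by
    rw [← Matrix.mul_assoc, A0_mul_B0, Matrix.mul_assoc]
  simp only [spliceD, row1, row2, row3, row4, row5, row6, X1M, kerEmb0, fromRows_mul,
    fromCols_mul_fromRows, Matrix.add_mul, ← mul_kronecker_mul, Matrix.one_mul, Matrix.mul_assoc,
    Matrix.zero_mul, Matrix.mul_zero, kronecker_zero, zero_kronecker, add_zero, zero_add,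
    hN, hN', hBDBN, hABN', ZModModule.add_self, fromRows_zero]

theorem kdim_mul_kdim_le_kdim_spliceD_of_injective_B0
    (h : Function.Injective e2.B0.mulVecLin) :
    kdim (e1.Binf * e1.B1) * kdim (e2.B1 * e2.B0) ≤ kdim (spliceD e1 e2) :=
  finrank_ker_mul_finrank_ker_le (kerEmb0_injective e1 e2 h)
    fun _ _ _ _ ↦ spliceD_mul_kerEmb0_mul_kronecker_eq_zero e1 e2

end Kernel

section Cokernel

variable (e1 e2 : SplicingDatum)

/-- The block row `(0, 1 ⊗ B₀, 0, B₀A_∞ ⊗ A₀, 0, B₀A_∞ ⊗ B₀)`, which induces a map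
from `coker D` to `coker (B₀B_∞) ⊗ coker (B₀B_∞)`. -/
def cokerProj0 : Matrix (Fin e1.ainf × Fin e2.ainf) (Tgt e1 e2) F2 :=
  fromCols 0 <| fromCols (1 ⊗ₖ e2.B0) <| fromCols 0 <|
    fromCols ((e1.B0 * e1.Ainf) ⊗ₖ e2.A0) <| fromCols 0 ((e1.B0 * e1.Ainf) ⊗ₖ e2.B0)

theorem cokerProj0_surjective (h : Function.Surjective e2.B0.mulVecLin) :
    Function.Surjective (cokerProj0 e1 e2).mulVecLin :=
  fromCols_mulVecLin_surjective_right _ <| fromCols_mulVecLin_surjective_left _ <|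
    kronecker_mulVecLin_surjective (by simp [Function.surjective_id]) h

theorem kronecker_mul_cokerProj0_mul_spliceD_eq_zero {κ κ' : Type*}
    {P : Matrix κ (Fin e1.ainf) F2} {P' : Matrix κ' (Fin e2.ainf) F2}
    (hP : P * (e1.B0 * e1.Binf) = 0) (hP' : P' * (e2.B0 * e2.Binf) = 0) :
    P ⊗ₖ P' * cokerProj0 e1 e2 * spliceD e1 e2 = 0 := by
  rw [← Matrix.mul_assoc] at hP hP'
  have hPBAB : P * e1.B0 * e1.Ainf * e1.Binf = 0 :=
    mul_mul_eq_zero_of_intertwine_right e1.Ainf_mul_Binf hP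
  have hP'AB : P' * e2.A0 * e2.B0 = P' * e2.B0 * e2.D0 := by
    rw [Matrix.mul_assoc, A0_mul_B0, Matrix.mul_assoc]
  simp only [spliceD, row1, row2, row3, row4, row5, row6, cokerProj0, mul_fromCols,
    fromCols_mul_fromRows, Matrix.mul_add, ← mul_kronecker_mul, Matrix.mul_one, ← Matrix.mul_assoc,
    Matrix.zero_mul, Matrix.mul_zero, kronecker_zero, zero_kronecker, add_zero, zero_add,
    hP, hP', hPBAB, hP'AB, fromCols_add_fromCols, fromCols_zero]
  simp only [add_assoc, add_left_comm, ZModModule.add_self, add_zero, fromCols_zero]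

theorem cdim_mul_cdim_le_cdim_spliceD_of_surjective_B0
    (h : Function.Surjective e2.B0.mulVecLin) :
    cdim (e1.B0 * e1.Binf) * cdim (e2.B0 * e2.Binf) ≤ cdim (spliceD e1 e2) :=
  finrank_quotient_range_mul_finrank_quotient_range_le (cokerProj0_surjective e1 e2 h)
    fun _ _ _ _ ↦ kronecker_mul_cokerProj0_mul_spliceD_eq_zero e1 e2

/-- The block row `(B_∞A₁ ⊗ A₁, 0, 0, 1 ⊗ B₁, B_∞A₁ ⊗ B₁, 0)`, which induces a map
from `coker D` to `coker (B_∞B₁) ⊗ coker (B₁B₀)`. -/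
def cokerProj1 : Matrix (Fin e1.a1 × Fin e2.a0) (Tgt e1 e2) F2 :=
  fromCols ((e1.Binf * e1.A1) ⊗ₖ e2.A1) <| fromCols 0 <| fromCols 0 <|
    fromCols (1 ⊗ₖ e2.B1) <| fromCols ((e1.Binf * e1.A1) ⊗ₖ e2.B1) 0

theorem cokerProj1_surjective (h : Function.Surjective e2.B1.mulVecLin) :
    Function.Surjective (cokerProj1 e1 e2).mulVecLin :=
  fromCols_mulVecLin_surjective_right _ <| fromCols_mulVecLin_surjective_right _ <|
    fromCols_mulVecLin_surjective_right _ <| fromCols_mulVecLin_surjective_left _ <|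
    kronecker_mulVecLin_surjective (by simp [Function.surjective_id]) h

theorem kronecker_mul_cokerProj1_mul_spliceD_eq_zero {κ κ' : Type*}
    {P : Matrix κ (Fin e1.a1) F2} {P' : Matrix κ' (Fin e2.a0) F2}
    (hP : P * (e1.Binf * e1.B1) = 0) (hP' : P' * (e2.B1 * e2.B0) = 0) :
    P ⊗ₖ P' * cokerProj1 e1 e2 * spliceD e1 e2 = 0 := by
  rw [← Matrix.mul_assoc] at hP hP'
  have hPBAB : P * e1.Binf * e1.A1 * e1.B1 = 0 :=
    mul_mul_eq_zero_of_intertwine_right e1.A1_mul_B1 hP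
  have hP'AB : P' * e2.A1 * e2.B1 = P' * e2.B1 * e2.D1 := by
    rw [Matrix.mul_assoc, A1_mul_B1, Matrix.mul_assoc]
  simp only [spliceD, row1, row2, row3, row4, row5, row6, cokerProj1, mul_fromCols,
    fromCols_mul_fromRows, Matrix.mul_add, ← mul_kronecker_mul, Matrix.mul_one, ← Matrix.mul_assoc,
    Matrix.zero_mul, Matrix.mul_zero, kronecker_zero, zero_kronecker, add_zero, zero_add,
    hP, hP', hPBAB, hP'AB, fromCols_add_fromCols, fromCols_zero]
  simp only [add_self_add_cancel, ZModModule.add_self, fromCols_zero]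

theorem cdim_mul_cdim_le_cdim_spliceD_of_surjective_B1
    (h : Function.Surjective e2.B1.mulVecLin) :
    cdim (e1.Binf * e1.B1) * cdim (e2.B1 * e2.B0) ≤ cdim (spliceD e1 e2) :=
  finrank_quotient_range_mul_finrank_quotient_range_le (cokerProj1_surjective e1 e2 h)
    fun _ _ _ _ ↦ kronecker_mul_cokerProj1_mul_spliceD_eq_zero e1 e2

/-- The block row `(1 ⊗ B_∞, B₁A₀ ⊗ A_∞, B₁A₀ ⊗ B_∞, 0, 0, 0)`, which induces a map
from `coker D` to `coker (B₁B₀) ⊗ coker (B_∞B₁)`. -/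
def cokerProjinf : Matrix (Fin e1.a0 × Fin e2.a1) (Tgt e1 e2) F2 :=
  fromCols (1 ⊗ₖ e2.Binf) <| fromCols ((e1.B1 * e1.A0) ⊗ₖ e2.Ainf) <|
    fromCols ((e1.B1 * e1.A0) ⊗ₖ e2.Binf) <| fromCols 0 <| fromCols 0 0

theorem cokerProjinf_surjective (h : Function.Surjective e2.Binf.mulVecLin) :
    Function.Surjective (cokerProjinf e1 e2).mulVecLin :=
  fromCols_mulVecLin_surjective_left _ <|
    kronecker_mulVecLin_surjective (by simp [Function.surjective_id]) h

theorem kronecker_mul_cokerProjinf_mul_spliceD_eq_zero {κ κ' : Type*}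
    {P : Matrix κ (Fin e1.a0) F2} {P' : Matrix κ' (Fin e2.a1) F2}
    (hP : P * (e1.B1 * e1.B0) = 0) (hP' : P' * (e2.Binf * e2.B1) = 0) :
    P ⊗ₖ P' * cokerProjinf e1 e2 * spliceD e1 e2 = 0 := by
  rw [← Matrix.mul_assoc] at hP hP'
  have hPBAB : P * e1.B1 * e1.A0 * e1.B0 = 0 :=
    mul_mul_eq_zero_of_intertwine_right e1.A0_mul_B0 hP
  have hP'AB : P' * e2.Ainf * e2.Binf = P' * e2.Binf * e2.Dinf := by
    rw [Matrix.mul_assoc, Ainf_mul_Binf, Matrix.mul_assoc]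
  simp only [spliceD, row1, row2, row3, row4, row5, row6, cokerProjinf, mul_fromCols,
    fromCols_mul_fromRows, Matrix.mul_add, ← mul_kronecker_mul, Matrix.mul_one, ← Matrix.mul_assoc,
    Matrix.zero_mul, Matrix.mul_zero, kronecker_zero, zero_kronecker, add_zero, zero_add,
    hP, hP', hPBAB, hP'AB, fromCols_add_fromCols, fromCols_zero]
  simp only [add_left_comm, add_self_add_cancel, ZModModule.add_self, fromCols_zero]

theorem cdim_mul_cdim_le_cdim_spliceD_of_surjective_Binf
    (h : Function.Surjective e2.Binf.mulVecLin) :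
    cdim (e1.B1 * e1.B0) * cdim (e2.Binf * e2.B1) ≤ cdim (spliceD e1 e2) :=
  finrank_quotient_range_mul_finrank_quotient_range_le (cokerProjinf_surjective e1 e2 h)
    fun _ _ _ _ ↦ kronecker_mul_cokerProjinf_mul_spliceD_eq_zero e1 e2

end Cokernel

end SplicingDatum

open SplicingDatum in
theorem stmt9_general (e1 e2 : SplicingDatum) :
    ((Function.Injective e2.B1.mulVecLin →
        kdim (spliceD e1 e2) ≥ kdim (e1.B1 * e1.B0) * kdim (e2.Binf * e2.B1)) ∧
      (Function.Surjective e2.B0.mulVecLin →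
        cdim (spliceD e1 e2) ≥ cdim (e1.B0 * e1.Binf) * cdim (e2.B0 * e2.Binf))) ∧
    ((Function.Injective e2.Binf.mulVecLin →
        kdim (spliceD e1 e2) ≥ kdim (e1.B0 * e1.Binf) * kdim (e2.B0 * e2.Binf)) ∧
      (Function.Surjective e2.B1.mulVecLin →
        cdim (spliceD e1 e2) ≥ cdim (e1.Binf * e1.B1) * cdim (e2.B1 * e2.B0))) ∧
    ((Function.Injective e2.B0.mulVecLin →
        kdim (spliceD e1 e2) ≥ kdim (e1.Binf * e1.B1) * kdim (e2.B1 * e2.B0)) ∧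
      (Function.Surjective e2.Binf.mulVecLin →
        cdim (spliceD e1 e2) ≥ cdim (e1.B1 * e1.B0) * cdim (e2.Binf * e2.B1))) :=
  ⟨⟨kdim_mul_kdim_le_kdim_spliceD_of_injective_B1 e1 e2,
      cdim_mul_cdim_le_cdim_spliceD_of_surjective_B0 e1 e2⟩,
    ⟨kdim_mul_kdim_le_kdim_spliceD_of_injective_Binf e1 e2,
      cdim_mul_cdim_le_cdim_spliceD_of_surjective_B1 e1 e2⟩,
    ⟨kdim_mul_kdim_le_kdim_spliceD_of_injective_B0 e1 e2,
      cdim_mul_cdim_le_cdim_spliceD_of_surjective_Binf e1 e2⟩⟩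

open SplicingDatum in
/-- Lemma on injective/surjective blocks, part 2.  The three conjuncts
correspond to the cyclic triples `(c,b,s) = (0,1,∞), (1,∞,0), (∞,0,1)`, with
`iota(0) = ∞`, `iota(1) = 1`, `iota(∞) = 0`. -/
theorem stmt9 (e1 e2 : SplicingDatum) :
    ((Function.Surjective e2.B0.mulVecLin ∧ Function.Injective e2.B1.mulVecLin) →
      kdim (spliceD e1 e2) ≥ kdim (e1.B1 * e1.B0) * kdim (e2.Binf * e2.B1) ∧
      cdim (spliceD e1 e2) ≥ cdim (e1.B0 * e1.Binf) * cdim (e2.B0 * e2.Binf)) ∧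
    ((Function.Surjective e2.B1.mulVecLin ∧ Function.Injective e2.Binf.mulVecLin) →
      kdim (spliceD e1 e2) ≥ kdim (e1.B0 * e1.Binf) * kdim (e2.B0 * e2.Binf) ∧
      cdim (spliceD e1 e2) ≥ cdim (e1.Binf * e1.B1) * cdim (e2.B1 * e2.B0)) ∧
    ((Function.Surjective e2.Binf.mulVecLin ∧ Function.Injective e2.B0.mulVecLin) →
      kdim (spliceD e1 e2) ≥ kdim (e1.Binf * e1.B1) * kdim (e2.B1 * e2.B0) ∧
      cdim (spliceD e1 e2) ≥ cdim (e1.B1 * e1.B0) * cdim (e2.Binf * e2.B1)) := by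
  obtain ⟨⟨hk1, hc0⟩, ⟨hkinf, hc1⟩, hk0, hcinf⟩ := stmt9_general e1 e2
  exact ⟨fun h ↦ ⟨hk1 h.2, hc0 h.1⟩, fun h ↦ ⟨hkinf h.2, hc1 h.1⟩, fun h ↦ ⟨hk0 h.2, hcinf h.1⟩⟩
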